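/- arXiv:2305.03357 — 7 statements merged into one kernel-verified Lean document; each statement's English description precedes it below -/
import Mathlib

section
/- Let X be a pospace. The relation on traces of X defined by ⟨f⟩ ≤ ⟨g⟩ iff there exist dipaths u, v in X with ⟨g⟩ = ⟨u⟩ ⋆ ⟨f⟩ ⋆ ⟨v⟩ is a partial order: it is reflexive, transitive, and antisymmetric. -/
open unitInterval

noncomputable section

/-- A reparametrization of the unit interval: continuous, monotone, fixing the endpoints. -/
def IsReparam (φ : unitInterval → unitInterval) : Prop :=
  Continuous φ ∧ Monotone φ ∧ φ 0 = 0 ∧ φ 1 = 1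

/-- Reparametrization equivalence of paths. -/
def ReparamEquiv {X : Type*} (f g : unitInterval → X) : Prop :=
  ∃ φ ψ : unitInterval → unitInterval, IsReparam φ ∧ IsReparam ψ ∧ f ∘ φ = g ∘ ψ

/-- A dipath in a pospace: a continuous monotone map `[0,1] → X`. -/
def IsDipath {X : Type*} [TopologicalSpace X] [Preorder X] (p : unitInterval → X) : Prop :=
  Continuous p ∧ Monotone p

/-- Concatenation of paths: `f` (rescaled) on `[0,1/2]`, `g` (rescaled) on `[1/2,1]`. -/
def concatFun {X : Type*} (f g : unitInterval → X) : unitInterval → X :=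
  fun t => if (t : ℝ) ≤ 1 / 2 then f (Set.projIcc 0 1 zero_le_one (2 * (t : ℝ)))
    else g (Set.projIcc 0 1 zero_le_one (2 * (t : ℝ) - 1))

/-- Traces: paths up to reparametrization equivalence. -/
def Trace (X : Type*) : Type _ := Quot (ReparamEquiv (X := X))

/-- The trace of a path. -/
def trc {X : Type*} (f : unitInterval → X) : Trace X := Quot.mk _ f

/-- The relation on traces of a pospace:
`⟨f⟩ ≤ ⟨g⟩` iff there are dipaths `u, v` with `⟨g⟩ = ⟨u⟩ ⋆ ⟨f⟩ ⋆ ⟨v⟩`. -/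
def TraceLE {X : Type*} [TopologicalSpace X] [PartialOrder X] (a b : Trace X) : Prop :=
  ∃ f u v : unitInterval → X,
    IsDipath f ∧ IsDipath u ∧ IsDipath v ∧
    u 1 = f 0 ∧ f 1 = v 0 ∧
    a = trc f ∧ b = trc (concatFun (concatFun u f) v)

theorem aux_range_eq_of_trc_eq {X : Type*} {f g : unitInterval → X} (h : trc f = trc g) :
    Set.range f = Set.range g := by
  have surj : ∀ φ : unitInterval → unitInterval, IsReparam φ → Function.Surjective φ := by
    rintro φ ⟨hc, -, h0, h1⟩ y
    have := intermediate_value_univ (0 : unitInterval) 1 hc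
    rw [h0, h1] at this
    exact this ⟨unitInterval.nonneg y, unitInterval.le_one y⟩
  have key : ∀ a b : unitInterval → X, ReparamEquiv a b → Set.range a = Set.range b := by
    rintro a b ⟨φ, ψ, hφ, hψ, e⟩
    rw [← (surj φ hφ).range_comp a, ← (surj ψ hψ).range_comp b, e]
  exact congrArg (Quot.lift (fun f : unitInterval → X => Set.range f) key) h

section aux
variable {X : Type*} [TopologicalSpace X] [PartialOrder X]

theorem aux_zero_eq {f g : unitInterval → X} (hf : Monotone f) (hg : Monotone g)
    (h : Set.range f = Set.range g) : f 0 = g 0 := by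
  obtain ⟨s, hs⟩ : f 0 ∈ Set.range g := h ▸ ⟨0, rfl⟩
  obtain ⟨t, ht⟩ : g 0 ∈ Set.range f := h ▸ ⟨0, rfl⟩
  apply le_antisymm
  · rw [← ht]; exact hf (unitInterval.nonneg t)
  · rw [← hs]; exact hg (unitInterval.nonneg s)

theorem aux_one_eq {f g : unitInterval → X} (hf : Monotone f) (hg : Monotone g)
    (h : Set.range f = Set.range g) : f 1 = g 1 := by
  obtain ⟨s, hs⟩ : f 1 ∈ Set.range g := h ▸ ⟨1, rfl⟩
  obtain ⟨t, ht⟩ : g 1 ∈ Set.range f := h ▸ ⟨1, rfl⟩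
  apply le_antisymm
  · rw [← hs]; exact hg (unitInterval.le_one s)
  · rw [← ht]; exact hf (unitInterval.le_one t)

theorem aux_concat_zero (f g : unitInterval → X) : concatFun f g 0 = f 0 := by
  simp [concatFun]

theorem aux_concat_one (f g : unitInterval → X) : concatFun f g 1 = g 1 := by
  have h : ¬ ((1 : ℝ) ≤ 1 / 2) := by norm_num
  have h2 : (2 * (1 : ℝ) - 1) = 1 := by norm_num
  simp only [concatFun, Set.Icc.coe_one, if_neg h, h2, Set.projIcc_right]
  rfl

theorem aux_concat_dipath {f g : unitInterval → X} (hf : IsDipath f) (hg : IsDipath g)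
    (h : f 1 = g 0) : IsDipath (concatFun f g) := by
  refine ⟨?_, ?_⟩
  · unfold concatFun
    refine Continuous.if_le ?_ ?_ (by fun_prop) (by fun_prop) ?_
    · exact hf.1.comp (continuous_projIcc.comp (by fun_prop))
    · exact hg.1.comp (continuous_projIcc.comp (by fun_prop))
    · intro x hx
      rw [hx]
      have e1 : Set.projIcc (0:ℝ) 1 zero_le_one (2 * (1/2)) = 1 := by
        rw [Set.projIcc_of_right_le _ (by norm_num)]; rfl
      have e2 : Set.projIcc (0:ℝ) 1 zero_le_one (2 * (1/2) - 1) = 0 := by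
        rw [Set.projIcc_of_le_left _ (by norm_num)]; rfl
      rw [e1, e2, h]
  · intro s t hst
    have hst' : (s : ℝ) ≤ t := hst
    unfold concatFun
    split_ifs with h1 h2 h2
    · exact hf.2 (Set.monotone_projIcc _ (by linarith))
    · exact (hf.2 (unitInterval.le_one _)).trans (h.le.trans (hg.2 (unitInterval.nonneg _)))
    · linarith
    · exact hg.2 (Set.monotone_projIcc _ (by linarith))

theorem aux_concat_range {f g : unitInterval → X} (h : f 1 = g 0) :
    Set.range (concatFun f g) = Set.range f ∪ Set.range g := by
  ext x
  constructor
  · rintro ⟨t, rfl⟩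
    unfold concatFun
    split_ifs
    · exact Or.inl ⟨_, rfl⟩
    · exact Or.inr ⟨_, rfl⟩
  · rintro (⟨t, rfl⟩ | ⟨t, rfl⟩)
    · have ht0 := t.2.1
      have ht1 := t.2.2
      refine ⟨⟨(t : ℝ) / 2, by constructor <;> linarith⟩, ?_⟩
      have e : 2 * ((t : ℝ) / 2) = t := by ring
      simp only [concatFun]
      rw [if_pos (by linarith), e, Set.projIcc_val]
    · have ht0 := t.2.1
      have ht1 := t.2.2
      rcases eq_or_lt_of_le ht0 with h0 | h0
      · have : t = 0 := Subtype.ext h0.symm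
        subst this
        refine ⟨⟨1 / 2, by constructor <;> norm_num⟩, ?_⟩
        simp only [concatFun]
        rw [if_pos le_rfl, Set.projIcc_of_right_le _ (by norm_num)]
        exact h
      · refine ⟨⟨((t : ℝ) + 1) / 2, by constructor <;> linarith⟩, ?_⟩
        have e : 2 * (((t : ℝ) + 1) / 2) - 1 = t := by ring
        simp only [concatFun]
        rw [if_neg (by linarith), e, Set.projIcc_val]

theorem aux_reparam [OrderClosedTopology X] {f g : unitInterval → X} (hf : IsDipath f)
    (hg : IsDipath g) (h : Set.range f = Set.range g) : ReparamEquiv f g := by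
  let F : ℝ → X := fun s => f (Set.projIcc 0 1 zero_le_one s)
  let G : ℝ → X := fun s => g (Set.projIcc 0 1 zero_le_one s)
  have hFc : Continuous F := hf.1.comp continuous_projIcc
  have hGc : Continuous G := hg.1.comp continuous_projIcc
  have hFm : Monotone F := hf.2.comp (Set.monotone_projIcc _)
  have hGm : Monotone G := hg.2.comp (Set.monotone_projIcc _)
  have hF0 : F 0 = f 0 := congrArg f (Set.projIcc_left _)
  have hF1 : F 1 = f 1 := congrArg f (Set.projIcc_right _)
  have hG0 : G 0 = g 0 := congrArg g (Set.projIcc_left _)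
  have hG1 : G 1 = g 1 := congrArg g (Set.projIcc_right _)
  have z := aux_zero_eq hf.2 hg.2 h
  have o := aux_one_eq hf.2 hg.2 h
  have lo1 : ∀ s, G 0 ≤ F s := fun s => by
    rw [hG0, ← z]; exact hf.2 (unitInterval.nonneg _)
  have lo2 : ∀ s, F 0 ≤ G s := fun s => by
    rw [hF0, z]; exact hg.2 (unitInterval.nonneg _)
  have hi1 : ∀ s, F s ≤ G 1 := fun s => by
    rw [hG1, ← o]; exact hf.2 (unitInterval.le_one _)
  have hi2 : ∀ s, G s ≤ F 1 := fun s => by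
    rw [hF1, o]; exact hg.2 (unitInterval.le_one _)
  have tot : ∀ s t, F s ≤ G t ∨ G t ≤ F s := by
    intro s t
    obtain ⟨q, hq⟩ : G t ∈ Set.range f := h ▸ ⟨_, rfl⟩
    rw [← hq]
    rcases le_total (Set.projIcc (0:ℝ) 1 zero_le_one s) q with h' | h'
    · exact Or.inl (hf.2 h')
    · exact Or.inr (hf.2 h')
  let S : ℝ → Set ℝ := fun r => Set.Icc (max 0 (r - 1)) (min 1 r) ∩ {s | F s = G (r - s)}
  have clA : ∀ r, IsClosed {s | F s ≤ G (r - s)} := fun r =>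
    isClosed_le hFc (hGc.comp (by fun_prop))
  have clB : ∀ r, IsClosed {s | G (r - s) ≤ F s} := fun r =>
    isClosed_le (hGc.comp (by fun_prop)) hFc
  have comp : ∀ r, IsCompact (S r) := by
    intro r
    refine isCompact_Icc.inter_right ?_
    have : {s | F s = G (r - s)} = {s | F s ≤ G (r - s)} ∩ {s | G (r - s) ≤ F s} := by
      ext s; exact le_antisymm_iff
    rw [this]
    exact (clA r).inter (clB r)
  have ne : ∀ r, 0 ≤ r → r ≤ 2 → (S r).Nonempty := by
    intro r h0 h2
    have hab : max 0 (r - 1) ≤ min 1 r := by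
      simp only [max_le_iff, le_min_iff]; constructor <;> constructor <;> linarith
    have pc : IsPreconnected (Set.Icc (max 0 (r - 1)) (min 1 r)) := isPreconnected_Icc
    obtain ⟨s, hs, hs1, hs2⟩ := isPreconnected_closed_iff.1 pc _ _ (clA r) (clB r)
      (fun s _ => tot s (r - s))
      ⟨_, Set.left_mem_Icc.2 hab, by
        change F _ ≤ G _
        rcases max_cases 0 (r - 1) with ⟨e, -⟩ | ⟨e, -⟩ <;> rw [e]
        · exact lo2 _
        · rw [sub_sub_cancel]; exact hi1 _⟩
      ⟨_, Set.right_mem_Icc.2 hab, by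
        change G _ ≤ F _
        rcases min_cases 1 r with ⟨e, -⟩ | ⟨e, -⟩ <;> rw [e]
        · exact hi2 _
        · rw [sub_self]; exact lo1 _⟩
    exact ⟨s, hs, le_antisymm hs1 hs2⟩
  have ex : ∀ x : unitInterval, ∃ s, IsLeast (S (2 * (x : ℝ))) s := fun x =>
    (comp _).exists_isLeast (ne _ (by linarith [x.2.1]) (by linarith [x.2.2]))
  choose p hp using ex
  have bd : ∀ x, 0 ≤ p x ∧ p x ≤ 1 ∧ 0 ≤ 2 * (x:ℝ) - p x ∧ 2 * (x:ℝ) - p x ≤ 1 := by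
    intro x
    have := (hp x).1.1
    simp only [Set.mem_Icc, max_le_iff, le_min_iff] at this
    obtain ⟨⟨a, b⟩, c, d⟩ := this
    exact ⟨a, c, by linarith, by linarith⟩
  have eq : ∀ x, F (p x) = G (2 * (x:ℝ) - p x) := fun x => (hp x).1.2
  -- elements of the section dominate `p x`
  have lb : ∀ (x : unitInterval) (s : ℝ), 0 ≤ s → s ≤ 1 → 0 ≤ 2 * (x:ℝ) - s →
      2 * (x:ℝ) - s ≤ 1 → F s = G (2 * (x:ℝ) - s) → p x ≤ s := by
    intro x s a b c d e
    refine (hp x).2 ⟨?_, e⟩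
    simp only [Set.mem_Icc, max_le_iff, le_min_iff]
    exact ⟨⟨a, by linarith⟩, b, by linarith⟩
  have mon : ∀ x y : unitInterval, (x:ℝ) ≤ y → p x ≤ p y ∧
      2 * (x:ℝ) - p x ≤ 2 * (y:ℝ) - p y := by
    intro x y hxy
    obtain ⟨a1, a2, a3, a4⟩ := bd x
    obtain ⟨b1, b2, b3, b4⟩ := bd y
    constructor
    · by_contra hlt
      push Not at hlt
      refine absurd (lb x (p y) b1 b2 (by linarith) (by linarith) ?_) (not_le.2 hlt)
      apply le_antisymm
      · exact (hFm hlt.le).trans ((eq x).le.trans (hGm (by linarith)))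
      · rw [eq y]; exact hGm (by linarith)
    · by_contra hlt
      push Not at hlt
      have hh := lb y (2 * (y:ℝ) - (2 * (x:ℝ) - p x)) (by linarith) (by linarith)
        (by linarith) (by linarith) ?_
      · linarith
      · rw [sub_sub_cancel]
        apply le_antisymm
        · calc F _ ≤ F (p y) := hFm (by linarith)
            _ = G _ := eq y
            _ ≤ _ := hGm hlt.le
        · rw [← eq x]; exact hFm (by linarith)
  have pc : Continuous p := by
    refine (LipschitzWith.of_dist_le_mul (K := 2) ?_).continuous
    intro x y
    rw [Subtype.dist_eq, Real.dist_eq, Real.dist_eq]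
    push_cast
    rcases le_total (x:ℝ) y with hxy | hxy
    · obtain ⟨a, b⟩ := mon x y hxy
      rw [abs_of_nonpos (by linarith), abs_of_nonpos (by linarith)]
      linarith
    · obtain ⟨a, b⟩ := mon y x hxy
      rw [abs_of_nonneg (by linarith), abs_of_nonneg (by linarith)]
      linarith
  refine ⟨fun x => ⟨p x, (bd x).1, (bd x).2.1⟩,
    fun x => ⟨2 * (x:ℝ) - p x, (bd x).2.2.1, (bd x).2.2.2⟩,
    ⟨by fun_prop, fun x y hxy => (mon x y hxy).1, ?_, ?_⟩,
    ⟨by fun_prop, fun x y hxy => (mon x y hxy).2, ?_, ?_⟩, ?_⟩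
  · apply Subtype.ext
    have := bd 0
    simp only [Set.Icc.coe_zero] at this ⊢
    linarith
  · apply Subtype.ext
    have := bd 1
    simp only [Set.Icc.coe_one] at this ⊢
    linarith
  · apply Subtype.ext
    have := bd 0
    simp only [Set.Icc.coe_zero] at this ⊢
    linarith
  · apply Subtype.ext
    have := bd 1
    simp only [Set.Icc.coe_one] at this ⊢
    linarith
  · funext x
    have := eq x
    simp only [F, G] at this
    rw [Set.projIcc_of_mem _ ⟨(bd x).1, (bd x).2.1⟩,
      Set.projIcc_of_mem _ ⟨(bd x).2.2.1, (bd x).2.2.2⟩] at this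
    exact this

theorem aux_trc_eq [OrderClosedTopology X] {f g : unitInterval → X} (hf : IsDipath f)
    (hg : IsDipath g) (h : Set.range f = Set.range g) : trc f = trc g :=
  Quot.sound (aux_reparam hf hg h)

/-- Basic facts on a triple concatenation. -/
theorem aux_triple {u f v : unitInterval → X} (hu : IsDipath u) (hf : IsDipath f)
    (hv : IsDipath v) (h1 : u 1 = f 0) (h2 : f 1 = v 0) :
    IsDipath (concatFun (concatFun u f) v) ∧
    Set.range (concatFun (concatFun u f) v) = (Set.range u ∪ Set.range f) ∪ Set.range v ∧
    concatFun (concatFun u f) v 0 = u 0 ∧ concatFun (concatFun u f) v 1 = v 1 := by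
  have e : concatFun u f 1 = v 0 := by rw [aux_concat_one, h2]
  refine ⟨aux_concat_dipath (aux_concat_dipath hu hf h1) hv e, ?_, ?_, ?_⟩
  · rw [aux_concat_range e, aux_concat_range h1]
  · rw [aux_concat_zero, aux_concat_zero]
  · rw [aux_concat_one]

end aux

/-- For a pospace `X` (Hausdorff, with closed partial order), the extension
relation on traces of `X` is a partial order: reflexive, transitive and antisymmetric. -/
theorem traceLE_is_partial_order
    {X : Type*} [TopologicalSpace X] [PartialOrder X] [T2Space X] [OrderClosedTopology X] :
    (∀ f : unitInterval → X, IsDipath f → TraceLE (trc f) (trc f)) ∧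
    (∀ a b c : Trace X, TraceLE a b → TraceLE b c → TraceLE a c) ∧
    (∀ a b : Trace X, TraceLE a b → TraceLE b a → a = b) := by
  refine ⟨?_, ?_, ?_⟩
  · intro f hf
    have hu : IsDipath (fun _ : unitInterval => f 0) := ⟨continuous_const, monotone_const⟩
    have hv : IsDipath (fun _ : unitInterval => f 1) := ⟨continuous_const, monotone_const⟩
    obtain ⟨d, r, -, -⟩ := aux_triple hu hf hv rfl rfl
    refine ⟨f, _, _, hf, hu, hv, rfl, rfl, rfl, aux_trc_eq hf d ?_⟩
    rw [r]
    ext x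
    constructor
    · exact fun hx => Or.inl (Or.inr hx)
    · rintro ((⟨_, rfl⟩ | hx) | ⟨_, rfl⟩)
      · exact ⟨0, rfl⟩
      · exact hx
      · exact ⟨1, rfl⟩
  · rintro a b c ⟨f, u, v, hf, hu, hv, h1, h2, rfl, rfl⟩
      ⟨f', u', v', hf', hu', hv', h1', h2', hb, rfl⟩
    obtain ⟨d, r, e0, e1⟩ := aux_triple hu hf hv h1 h2
    obtain ⟨d', r', -, -⟩ := aux_triple hu' hf' hv' h1' h2'
    have hr := aux_range_eq_of_trc_eq hb
    have z := aux_zero_eq d.2 hf'.2 hr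
    have o := aux_one_eq d.2 hf'.2 hr
    have hU1 : u' 1 = u 0 := by rw [h1', ← z, e0]
    have hV1 : v 1 = v' 0 := by rw [← h2', ← o, e1]
    have hU := aux_concat_dipath hu' hu hU1
    have hV := aux_concat_dipath hv hv' hV1
    have k1 : concatFun u' u 1 = f 0 := by rw [aux_concat_one, h1]
    have k2 : f 1 = concatFun v v' 0 := by rw [aux_concat_zero, h2]
    obtain ⟨D, R, -, -⟩ := aux_triple hU hf hV k1 k2
    refine ⟨f, _, _, hf, hU, hV, k1, k2, rfl, aux_trc_eq d' D ?_⟩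
    rw [R, r', ← hr, r, aux_concat_range hU1, aux_concat_range hV1]
    simp only [Set.union_assoc]
  · rintro a b ⟨f, u, v, hf, hu, hv, h1, h2, rfl, hb⟩
      ⟨f', u', v', hf', hu', hv', h1', h2', rfl, ha⟩
    obtain ⟨-, r, -, -⟩ := aux_triple hu hf hv h1 h2
    obtain ⟨-, r', -, -⟩ := aux_triple hu' hf' hv' h1' h2'
    apply aux_trc_eq hf hf'
    apply Set.Subset.antisymm
    · rw [aux_range_eq_of_trc_eq hb, r]
      exact fun x hx => Or.inl (Or.inr hx)
    · rw [aux_range_eq_of_trc_eq ha, r']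
      exact fun x hx => Or.inl (Or.inr hx)

end
end

section
/- Let X be a pospace and p a dipath in X. Then either p is constant (its image is a singleton), or there exists a bijection h : [0,1] → p([0,1]) that is simultaneously a homeomorphism onto the image with its subspace topology and an order isomorphism onto the image with the order induced from X. -/
open unitInterval

noncomputable section

theorem dipath_between
    {X : Type*} [TopologicalSpace X] [PartialOrder X] [T2Space X] [OrderClosedTopology X]
    (p : unitInterval → X) (hcont : Continuous p) (hmono : Monotone p)
    (D : Set unitInterval) (hD : Dense D) (a b : unitInterval) (hab : p a < p b) :
    ∃ d ∈ D, p a < p d ∧ p d < p b := by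
  have hA : IsClosed {t | p t ≤ p a} := isClosed_le hcont continuous_const
  have hB : IsClosed {t | p b ≤ p t} := isClosed_le continuous_const hcont
  have key : ∀ t, t ∈ ({t | p t ≤ p a} ∪ {t | p b ≤ p t})ᶜ → p a < p t ∧ p t < p b := by
    intro t ht
    simp only [Set.mem_compl_iff, Set.mem_union, Set.mem_setOf_eq, not_or] at ht
    constructor
    · rcases le_total a t with h | h
      · exact lt_of_le_not_ge (hmono h) ht.1
      · exact absurd (hmono h) ht.1
    · rcases le_total t b with h | h
      · exact lt_of_le_not_ge (hmono h) ht.2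
      · exact absurd (hmono h) ht.2
  have hne : (({t | p t ≤ p a} ∪ {t | p b ≤ p t})ᶜ).Nonempty := by
    by_contra hcon
    rw [Set.not_nonempty_iff_eq_empty, Set.compl_empty_iff] at hcon
    obtain ⟨t, -, h1, h2⟩ := isPreconnected_closed_iff.1
      (isPreconnected_univ (α := unitInterval)) _ _ hA hB (by rw [hcon])
      ⟨a, trivial, le_refl (p a)⟩ ⟨b, trivial, le_refl (p b)⟩
    exact absurd (lt_of_lt_of_le hab (le_trans h2 h1)) (lt_irrefl _)
  obtain ⟨d, hd, hdD⟩ := hD.inter_open_nonempty _ (hA.union hB).isOpen_compl hne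
  exact ⟨d, hdD, key d hd⟩

theorem dipath_reparam
    {X : Type*} [TopologicalSpace X] [PartialOrder X] [T2Space X] [OrderClosedTopology X]
    (p : unitInterval → X) (hcont : Continuous p) (hmono : Monotone p) (h01 : p 0 < p 1) :
    ∃ f : unitInterval → unitInterval, Monotone f ∧ DenseRange f ∧
      (∀ a b, p a = p b → f a = f b) ∧ (∀ a b, p a < p b → f a < f b) := by
  obtain ⟨D, hDc, hD⟩ := TopologicalSpace.exists_countable_dense unitInterval
  have btw := dipath_between p hcont hmono D hD
  let S : Set X := {y | (∃ d ∈ D, p d = y) ∧ p 0 < y ∧ y < p 1}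
  have hSc : S.Countable := (hDc.image p).mono (by rintro y ⟨⟨d, hd, rfl⟩, -⟩; exact ⟨d, hd, rfl⟩)
  letI : LinearOrder S :=
    { (inferInstance : PartialOrder S) with
      le_total := by
        rintro ⟨_, ⟨d, hd, rfl⟩, -⟩ ⟨_, ⟨e, he, rfl⟩, -⟩
        rcases le_total d e with h | h
        · exact Or.inl (hmono h)
        · exact Or.inr (hmono h)
      toDecidableLE := Classical.decRel _ }
  haveI : Countable S := hSc.to_subtype
  haveI : DenselyOrdered S := ⟨by
    rintro ⟨_, ⟨d, hd, rfl⟩, h1, h2⟩ ⟨_, ⟨e, he, rfl⟩, h3, h4⟩ hlt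
    obtain ⟨c, hc, h5, h6⟩ := btw d e hlt
    exact ⟨⟨p c, ⟨c, hc, rfl⟩, h1.trans h5, h6.trans h4⟩, h5, h6⟩⟩
  haveI : NoMinOrder S := ⟨by
    rintro ⟨_, ⟨d, hd, rfl⟩, h1, h2⟩
    obtain ⟨c, hc, h5, h6⟩ := btw 0 d h1
    exact ⟨⟨p c, ⟨c, hc, rfl⟩, h5, h6.trans h2⟩, h6⟩⟩
  haveI : NoMaxOrder S := ⟨by
    rintro ⟨_, ⟨d, hd, rfl⟩, h1, h2⟩
    obtain ⟨c, hc, h5, h6⟩ := btw d 1 h2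
    exact ⟨⟨p c, ⟨c, hc, rfl⟩, h1.trans h5, h6⟩, h5⟩⟩
  haveI : Nonempty S := by
    obtain ⟨c, hc, h5, h6⟩ := btw 0 1 h01
    exact ⟨⟨p c, ⟨c, hc, rfl⟩, h5, h6⟩⟩
  haveI : Nonempty (Set.Ioo (0:ℚ) 1) := ⟨⟨1/2, by norm_num, by norm_num⟩⟩
  obtain ⟨φ⟩ := Order.iso_of_countable_dense S (Set.Ioo (0:ℚ) 1)
  let ι : Set.Ioo (0:ℚ) 1 → unitInterval := fun q =>
    ⟨((q : ℚ) : ℝ), by exact_mod_cast q.2.1.le, by exact_mod_cast q.2.2.le⟩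
  have hι : StrictMono ι := by
    intro q r h
    have h' : (q : ℚ) < r := h
    change ((q : ℚ) : ℝ) < ((r : ℚ) : ℝ)
    exact_mod_cast h'
  have hg : StrictMono (fun s : S => ι (φ s)) := hι.comp φ.strictMono
  let f : unitInterval → unitInterval := fun t => sSup ((fun s : S => ι (φ s)) '' {s | (s : X) ≤ p t})
  have hfle : ∀ t (s : S), p t ≤ s → f t ≤ ι (φ s) := by
    intro t s h
    apply sSup_le
    rintro _ ⟨r, hr, rfl⟩
    exact hg.monotone (show (r : X) ≤ s from le_trans hr h)
  have hlef : ∀ t (s : S), (s : X) ≤ p t → ι (φ s) ≤ f t := fun t s h => le_sSup ⟨s, h, rfl⟩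
  refine ⟨f, ?_, ?_, ?_, ?_⟩
  · intro a b hab
    apply sSup_le_sSup
    apply Set.image_mono
    intro s hs
    exact le_trans hs (hmono hab)
  · apply dense_of_exists_between
    intro u v huv
    obtain ⟨q, hq1, hq2⟩ := exists_rat_btwn (show (u : ℝ) < v from huv)
    have q0 : (0:ℝ) < q := lt_of_le_of_lt u.2.1 hq1
    have q1 : (q:ℝ) < 1 := lt_of_lt_of_le hq2 v.2.2
    let Q : Set.Ioo (0:ℚ) 1 := ⟨q, by exact_mod_cast q0, by exact_mod_cast q1⟩
    obtain ⟨s, hs⟩ := φ.surjective Q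
    obtain ⟨d, hd, hds⟩ := s.2.1
    have : f d = ι Q := by
      rw [← hs]
      exact le_antisymm (hfle d s hds.le) (hlef d s hds.ge)
    refine ⟨f d, ⟨d, rfl⟩, ?_, ?_⟩
    · rw [this]; exact hq1
    · rw [this]; exact hq2
  · intro a b hab
    simp only [f, hab]
  · intro a b hab
    obtain ⟨c, hc, h1, h2⟩ := btw a b hab
    obtain ⟨d, hd, h3, h4⟩ := btw c b h2
    have b0 : p 0 ≤ p a := hmono a.2.1
    have b1 : p b ≤ p 1 := hmono b.2.2
    let C : S := ⟨p c, ⟨c, hc, rfl⟩, b0.trans_lt h1, h2.trans_le b1⟩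
    let E : S := ⟨p d, ⟨d, hd, rfl⟩, (b0.trans_lt h1).trans h3, h4.trans_le b1⟩
    exact (hfle a C h1.le).trans_lt ((hg (show C < E from h3)).trans_le (hlef b E h4.le))

/-- In a pospace `X` (Hausdorff, with closed partial order), any dipath
`p : [0,1] → X` (continuous and monotone) is either constant (its image is a singleton), or
there is a bijection `h` from `[0,1]` onto the image of `p` which is simultaneously an order
isomorphism (for the order induced from `X`) and a homeomorphism (for the subspace
topology). -/
theorem dipath_constant_or_iso_image
    {X : Type*} [TopologicalSpace X] [PartialOrder X] [T2Space X] [OrderClosedTopology X]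
    (p : unitInterval → X) (hcont : Continuous p) (hmono : Monotone p) :
    (∃ x : X, ∀ t, p t = x) ∨
    ∃ h : unitInterval ≃o Set.range p, Continuous h ∧ Continuous h.symm := by
  by_cases h01 : p 0 = p 1
  · left
    exact ⟨p 0, fun t => le_antisymm (h01 ▸ hmono t.2.2) (hmono t.2.1)⟩
  right
  have hlt : p 0 < p 1 := lt_of_le_of_ne (hmono (zero_le_one)) h01
  obtain ⟨f, fm, fd, feq, flt⟩ := dipath_reparam p hcont hmono hlt
  have fc : Continuous f := fm.continuous_of_denseRange fd
  have fs : Function.Surjective f := by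
    rw [← Set.range_eq_univ, ← (isCompact_range fc).isClosed.closure_eq]
    exact fd.closure_range
  let g : Set.range p → unitInterval := fun y => f y.2.choose
  have hg : ∀ t, g ⟨p t, t, rfl⟩ = f t := fun t =>
    feq _ _ (Exists.choose_spec (⟨t, rfl⟩ : ∃ s, p s = p t))
  have gle : ∀ x y, g x ≤ g y ↔ x ≤ y := by
    rintro ⟨_, a, rfl⟩ ⟨_, b, rfl⟩
    rw [hg, hg]
    change f a ≤ f b ↔ p a ≤ p b
    constructor
    · intro h
      rcases le_total a b with h' | h'
      · exact hmono h'
      · by_contra hn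
        exact absurd (flt b a (lt_of_le_not_ge (hmono h') hn)) (not_lt.2 h)
    · intro h
      rcases h.eq_or_lt with h' | h'
      · exact (feq _ _ h').le
      · exact (flt _ _ h').le
  have gs : Function.Surjective g := fun u => by
    obtain ⟨t, rfl⟩ := fs u
    exact ⟨_, hg t⟩
  have ginj : Function.Injective g := fun x y h =>
    le_antisymm ((gle _ _).1 h.le) ((gle _ _).1 h.ge)
  let G : Set.range p ≃o unitInterval :=
    { Equiv.ofBijective g ⟨ginj, gs⟩ with map_rel_iff' := fun {x y} => gle x y }
  have hq : Topology.IsQuotientMap (Set.rangeFactorization p) :=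
    (hcont.subtype_mk _).isClosedMap.isQuotientMap (hcont.subtype_mk _)
      Set.rangeFactorization_surjective
  have gc : Continuous G := by
    rw [hq.continuous_iff]
    exact fc.congr fun t => (hg t).symm
  haveI : CompactSpace (Set.range p) := isCompact_iff_compactSpace.1 (isCompact_range hcont)
  refine ⟨G.symm, ?_, gc⟩
  exact Continuous.continuous_symm_of_equiv_compact_to_t2 (f := G.toEquiv) gc

end
end

section
/- Let X be a pospace. Two dipaths f, g in X are reparametrization equivalent if and only if they have the same image, f([0,1]) = g([0,1]). -/
open unitInterval

noncomputable section

theorem reparam_exists_min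
    {X : Type*} [TopologicalSpace X] [PartialOrder X] [OrderClosedTopology X]
    (F G : ℝ → X) (hF : Continuous F) (hG : Continuous G)
    (hc : ∀ s t, F s ≤ G t ∨ G t ≤ F s)
    (h0 : ∀ t, F 0 ≤ G t) (h0' : ∀ t, G 0 ≤ F t)
    (h1 : ∀ t, F t ≤ G 1) (h1' : ∀ t, G t ≤ F 1) (u : ℝ) (hu0 : 0 ≤ u) (hu2 : u ≤ 2) :
    ∃ s, (0 ≤ s ∧ s ≤ 1 ∧ 0 ≤ u - s ∧ u - s ≤ 1 ∧ F s = G (u - s)) ∧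
      ∀ r, 0 ≤ r → r ≤ 1 → 0 ≤ u - r → u - r ≤ 1 → F r = G (u - r) → s ≤ r := by
  have hGu : Continuous fun s => G (u - s) := hG.comp (by fun_prop)
  have hab : max 0 (u - 1) ≤ min 1 u := by
    simp only [max_le_iff, le_min_iff]; constructor <;> constructor <;> linarith
  have key := isPreconnected_closed_iff.1 (isPreconnected_Icc (a := max 0 (u - 1)) (b := min 1 u))
    {s | F s ≤ G (u - s)} {s | G (u - s) ≤ F s} (isClosed_le hF hGu) (isClosed_le hGu hF)
    (fun s _ => hc s (u - s))
    ⟨max 0 (u - 1), ⟨le_rfl, hab⟩, by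
      rcases max_choice 0 (u - 1) with h | h <;> rw [h]
      · exact h0 _
      · have := h1 (u - 1)
        simpa using this⟩
    ⟨min 1 u, ⟨hab, le_rfl⟩, by
      rcases min_choice 1 u with h | h <;> rw [h]
      · exact h1' _
      · have := h0' u
        simpa using this⟩
  have hK : IsCompact (Set.Icc (max 0 (u - 1)) (min 1 u) ∩
      ({s | F s ≤ G (u - s)} ∩ {s | G (u - s) ≤ F s})) :=
    isCompact_Icc.inter_right ((isClosed_le hF hGu).inter (isClosed_le hGu hF))
  obtain ⟨s, ⟨⟨hs1, hs2⟩, hs3, hs4⟩, hmin⟩ := hK.exists_isLeast key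
  simp only [max_le_iff, le_min_iff] at hs1 hs2
  refine ⟨s, ⟨hs1.1, hs2.1, by linarith, by linarith, le_antisymm hs3 hs4⟩, ?_⟩
  intro r hr0 hr1 hr2 hr3 hr
  refine hmin ⟨⟨?_, ?_⟩, hr.le, hr.ge⟩
  · exact max_le hr0 (by linarith)
  · exact le_min hr1 (by linarith)

/-- The crossing argument: a point of the coincidence set with a point up and to the left
(or the corresponding rectangle) is not minimal on its antidiagonal. -/
theorem reparam_rect {X : Type*} [PartialOrder X] (F G : ℝ → X) (hF : Monotone F)
    (hG : Monotone G) {a b c d : ℝ} (hab : a ≤ b) (hcd : c ≤ d)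
    (h1 : F a = G d) (h2 : F b = G c) {x y : ℝ} (hax : a ≤ x) (hxb : x ≤ b)
    (hcy : c ≤ y) (hyd : y ≤ d) : F x = G y := by
  have e1 : F b ≤ F a := by rw [h1, h2]; exact hG hcd
  have e2 : F x = F a := le_antisymm ((hF hxb).trans e1) (hF hax)
  have e3 : G y = F a := le_antisymm (h1 ▸ hG hyd) ((hF hab).trans (h2 ▸ hG hcy))
  rw [e2, e3]

/-- In a pospace `X` (Hausdorff, with closed partial order), two dipaths
`f, g` are reparametrization equivalent if and only if they have the same image. -/
theorem reparamEquiv_iff_range_eq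
    {X : Type*} [TopologicalSpace X] [PartialOrder X] [T2Space X] [OrderClosedTopology X]
    (f g : unitInterval → X) (hf : IsDipath f) (hg : IsDipath g) :
    ReparamEquiv f g ↔ Set.range f = Set.range g := by
  obtain ⟨hfc, hfm⟩ := hf
  obtain ⟨hgc, hgm⟩ := hg
  constructor
  · rintro ⟨φ, ψ, ⟨hφc, -, hφ0, hφ1⟩, ⟨hψc, -, hψ0, hψ1⟩, h⟩
    have surj : ∀ χ : unitInterval → unitInterval, Continuous χ → χ 0 = 0 → χ 1 = 1 →
        Function.Surjective χ := by
      intro χ hχ h0 h1 y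
      have := intermediate_value_Icc (zero_le_one' unitInterval) hχ.continuousOn
      rw [h0, h1] at this
      obtain ⟨x, -, hx⟩ := this ⟨unitInterval.nonneg', unitInterval.le_one'⟩
      exact ⟨x, hx⟩
    rw [← (surj φ hφc hφ0 hφ1).range_comp f, h, (surj ψ hψc hψ0 hψ1).range_comp g]
  · intro h
    have hfg : ∀ t, ∃ s, f s = g t := fun t => by
      have : g t ∈ Set.range f := h ▸ ⟨t, rfl⟩
      exact this
    have hgf : ∀ t, ∃ s, g s = f t := fun t => by
      have : f t ∈ Set.range g := h ▸ ⟨t, rfl⟩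
      exact this
    let F : ℝ → X := Set.IccExtend (zero_le_one' ℝ) f
    let G : ℝ → X := Set.IccExtend (zero_le_one' ℝ) g
    have hF : Continuous F := hfc.Icc_extend'
    have hG : Continuous G := hgc.Icc_extend'
    have hFm : Monotone F := hfm.IccExtend _
    have hGm : Monotone G := hgm.IccExtend _
    have F0 : F 0 = f 0 := Set.IccExtend_left _ _
    have G0 : G 0 = g 0 := Set.IccExtend_left _ _
    have F1 : F 1 = f 1 := Set.IccExtend_right _ _
    have G1 : G 1 = g 1 := Set.IccExtend_right _ _
    have hFe : ∀ t, ∃ s, F t = f s := fun t => ⟨_, rfl⟩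
    have hGe : ∀ t, ∃ s, G t = g s := fun t => ⟨_, rfl⟩
    have ex := fun v : unitInterval => reparam_exists_min F G hF hG
      (fun s t => by
        obtain ⟨a, ha⟩ := hFe s
        obtain ⟨b, hb⟩ := hGe t
        obtain ⟨c, hc⟩ := hfg b
        rw [ha, hb, ← hc]
        exact (le_total a c).imp (fun h => hfm h) (fun h => hfm h))
      (fun t => by
        obtain ⟨b, hb⟩ := hGe t
        obtain ⟨c, hc⟩ := hfg b
        rw [F0, hb, ← hc]; exact hfm unitInterval.nonneg')
      (fun t => by
        obtain ⟨b, hb⟩ := hFe t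
        obtain ⟨c, hc⟩ := hgf b
        rw [G0, hb, ← hc]; exact hgm unitInterval.nonneg')
      (fun t => by
        obtain ⟨b, hb⟩ := hFe t
        obtain ⟨c, hc⟩ := hgf b
        rw [G1, hb, ← hc]; exact hgm unitInterval.le_one')
      (fun t => by
        obtain ⟨b, hb⟩ := hGe t
        obtain ⟨c, hc⟩ := hfg b
        rw [F1, hb, ← hc]; exact hfm unitInterval.le_one')
      (2 * (v : ℝ)) (by linarith [v.2.1]) (by linarith [v.2.2])
    choose m hm hmin using ex
    have mono1 : Monotone m := by
      intro v w hvw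
      have hvw' : (v : ℝ) ≤ w := hvw
      by_contra! hlt
      obtain ⟨a1, a2, a3, a4, a5⟩ := hm v
      obtain ⟨b1, b2, b3, b4, b5⟩ := hm w
      have := hmin v (m w) b1 b2 (by linarith) (by linarith)
        (reparam_rect F G hFm hGm hlt.le (by linarith) b5 a5 le_rfl hlt.le
          (by linarith) (by linarith))
      linarith
    have mono2 : Monotone fun v : unitInterval => 2 * (v : ℝ) - m v := by
      intro v w hvw
      have hvw' : (v : ℝ) ≤ w := hvw
      by_contra! hlt
      obtain ⟨a1, a2, a3, a4, a5⟩ := hm v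
      obtain ⟨b1, b2, b3, b4, b5⟩ := hm w
      have hle := mono1 hvw
      -- the point with second coordinate that of `v` on the antidiagonal of `w`
      have := hmin w (2 * (w : ℝ) - (2 * (v : ℝ) - m v)) (by linarith) (by linarith)
        (by linarith) (by linarith)
        (reparam_rect F G hFm hGm hle hlt.le a5 b5 (by linarith) (by linarith)
          (by linarith) (by linarith))
      linarith
    have mc : Continuous m := by
      have : LipschitzWith 2 m := by
        apply LipschitzWith.of_le_add_mul
        intro v w
        have hd : dist v w = |(v : ℝ) - w| := rfl
        rw [hd]
        push_cast
        rcases le_total v w with hvw | hvw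
        · have := mono1 hvw
          have := abs_nonneg ((v : ℝ) - w)
          linarith
        · have := mono2 hvw
          have := le_abs_self ((v : ℝ) - w)
          simp only at *
          linarith
      exact this.continuous
    refine ⟨fun v => ⟨m v, (hm v).1, (hm v).2.1⟩,
      fun v => ⟨2 * (v : ℝ) - m v, (hm v).2.2.1, (hm v).2.2.2.1⟩,
      ⟨by fun_prop, fun v w h => mono1 h, ?_, ?_⟩, ⟨by fun_prop, fun v w h => mono2 h, ?_, ?_⟩, ?_⟩
    · obtain ⟨a1, a2, a3, a4, -⟩ := hm 0
      apply Subtype.ext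
      simp only [Set.Icc.coe_zero] at *
      linarith
    · obtain ⟨a1, a2, a3, a4, -⟩ := hm 1
      apply Subtype.ext
      simp only [Set.Icc.coe_one] at *
      linarith
    · obtain ⟨a1, a2, a3, a4, -⟩ := hm 0
      apply Subtype.ext
      simp only [Set.Icc.coe_zero] at *
      linarith
    · obtain ⟨a1, a2, a3, a4, -⟩ := hm 1
      apply Subtype.ext
      simp only [Set.Icc.coe_one] at *
      linarith
    · funext v
      obtain ⟨a1, a2, a3, a4, a5⟩ := hm v
      have e1 : F (m v) = f ⟨m v, a1, a2⟩ := Set.IccExtend_of_mem _ _ _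
      have e2 : G (2 * (v : ℝ) - m v) = g ⟨2 * (v : ℝ) - m v, a3, a4⟩ :=
        Set.IccExtend_of_mem _ _ _
      simp only [Function.comp]
      rw [← e1, ← e2, a5]

end
end

section
/- Let P be a poset, C a cocomplete category, and D : P → C a functor (P viewed as a category). Let Φ be a set of sub-posets of P, partially ordered by inclusion, such that P together with the inclusion maps is the colimit, in the category of posets and monotone maps, of the diagram of inclusions among the members of Φ. Then (P, D), together with the morphisms (ι_p, identity) : (P_p, D restricted to P_p) → (P, D) for p ∈ Φ (ι_p the inclusion), is a colimit cocone in Pers(C) over the functor Φ → Pers(C) sending p to (P_p, D restricted to P_p) and each inclusion P_p ⊆ P_q to the morphism (inclusion, identity). -/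
open CategoryTheory

universe u v w

/-- A point of `P` together with a member of the cover containing it. -/
structure CoverPoint {P : Type w} (Φ : Set (Set P)) : Type w where
  S : Set P
  hS : S ∈ Φ
  pt : ↥S

/-- Let `P` be a poset, `C` a cocomplete category, `D : P ⥤ C` a functor, and
`Φ` a set of sub-posets of `P` such that `P` (with the inclusion maps) is the colimit, in the
category of posets and monotone maps, of the diagram of inclusions among the members of `Φ`.
Then `(P, D)`, with the morphisms `(inclusion, identity)`, is a colimit cocone in `Pers(C)` over
the diagram `p ↦ (P_p, D|_{P_p})`.  A morphism `(P,F) → (Q,G)` of `Pers(C)` is presented here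
componentwise: a monotone map `φ` together with maps `σ_x : F x ⟶ G (φ x)` natural in `x`. -/
theorem persistence_colimit_of_subposet_cover
    {C : Type u} [Category.{v} C] [Limits.HasColimits C]
    {P : Type w} [PartialOrder P] (D : P ⥤ C) (Φ : Set (Set P))
    -- `P` is the colimit in `Pos` of the diagram of inclusions among the members of `Φ`
    (hcolim : ∀ (Q : Type w) [PartialOrder Q] (h : ∀ S ∈ Φ, (↥S →o Q)),
      (∀ (S : Set P) (hS : S ∈ Φ) (S' : Set P) (hS' : S' ∈ Φ) (hsub : S ⊆ S') (x : ↥S),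
        h S' hS' ⟨x.1, hsub x.2⟩ = h S hS x) →
      ∃! H : P →o Q, ∀ (S : Set P) (hS : S ∈ Φ) (x : ↥S), H x.1 = h S hS x) :
    -- conclusion: universal property of the cocone `(P, D)` in `Pers(C)`
    ∀ (Q : Type w) [PartialOrder Q] (G : Q ⥤ C)
      (φ : ∀ S ∈ Φ, (↥S →o Q))
      (σ : ∀ (S : Set P) (hS : S ∈ Φ) (x : ↥S), D.obj x.1 ⟶ G.obj (φ S hS x)),
      -- each `(φ_S, σ_S)` is a morphism `(S, D|_S) → (Q, G)` in `Pers(C)`: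
      (∀ (S : Set P) (hS : S ∈ Φ) (x y : ↥S) (hxy : x ≤ y),
        D.map (homOfLE (show x.1 ≤ y.1 from hxy)) ≫ σ S hS y =
          σ S hS x ≫ G.map (homOfLE ((φ S hS).monotone hxy))) →
      -- the family is compatible with the inclusions among members of `Φ`:
      ∀ (hφ : ∀ (S : Set P) (hS : S ∈ Φ) (S' : Set P) (hS' : S' ∈ Φ) (hsub : S ⊆ S') (x : ↥S),
          φ S' hS' ⟨x.1, hsub x.2⟩ = φ S hS x),
      (∀ (S : Set P) (hS : S ∈ Φ) (S' : Set P) (hS' : S' ∈ Φ) (hsub : S ⊆ S') (x : ↥S),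
        σ S' hS' ⟨x.1, hsub x.2⟩ =
          σ S hS x ≫ eqToHom (congrArg G.obj (hφ S hS S' hS' hsub x).symm)) →
      -- there is a unique morphism `(P, D) → (Q, G)` in `Pers(C)` through which
      -- every `(φ_S, σ_S)` factors via `(inclusion, identity)`
      ∃! Hσ : Σ' H : P →o Q, ∀ x : P, D.obj x ⟶ G.obj (H x),
        (∀ (x y : P) (hxy : x ≤ y),
          D.map (homOfLE hxy) ≫ Hσ.2 y = Hσ.2 x ≫ G.map (homOfLE (Hσ.1.monotone hxy))) ∧
        (∀ (S : Set P) (hS : S ∈ Φ) (x : ↥S),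
          ∃ h : Hσ.1 x.1 = φ S hS x,
            Hσ.2 x.1 = σ S hS x ≫ eqToHom (congrArg G.obj h.symm)) := by
  intro Q _ G φ σ hnat hφ hσ
  classical
  -- every point of `P` lies in some member of `Φ`
  have hcov : ∀ x : P, ∃ S, S ∈ Φ ∧ x ∈ S := by
    intro x0
    by_contra hx
    have hne : ∀ (S : Set P), S ∈ Φ → ∀ x : ↥S, x0 ≠ x.1 := by
      intro S hS x e
      exact hx ⟨S, hS, e ▸ x.2⟩
    let H1 : P →o Set P :=
      ⟨fun y => {z | z = x0 ∧ x0 ≤ y}, fun a b hab z hz => ⟨hz.1, hz.2.trans hab⟩⟩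
    let H2 : P →o Set P :=
      ⟨fun y => {z | z = x0 ∧ x0 < y}, fun a b hab z hz => ⟨hz.1, hz.2.trans_le hab⟩⟩
    have hu := hcolim (Set P)
      (fun S _ => ⟨fun y => H1 y.1, fun a b hab => H1.monotone hab⟩)
      (fun S hS S' hS' hsub x => rfl)
    have he : H1 = H2 := by
      refine hu.unique (fun S hS x => rfl) ?_
      intro S hS x
      ext z
      constructor
      · intro hz
        exact ⟨hz.1, hz.2.le⟩
      · intro hz
        exact ⟨hz.1, lt_of_le_of_ne hz.2 (hne S hS x)⟩
    have h1 : x0 ∈ H1 x0 := ⟨rfl, le_rfl⟩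
    rw [he] at h1
    exact lt_irrefl x0 h1.2
  -- naturality between arbitrary members
  have key : ∀ (S : Set P) (hS : S ∈ Φ) (x : ↥S) (S' : Set P) (hS' : S' ∈ Φ) (y : ↥S')
      (hxy : x.1 ≤ y.1), ∃ h : φ S hS x ≤ φ S' hS' y,
        D.map (homOfLE hxy) ≫ σ S' hS' y = σ S hS x ≫ G.map (homOfLE h) := by
    let X := CoverPoint Φ
    let _ : Preorder X :=
      { le := fun a b => ∃ (h1 : a.pt.1 ≤ b.pt.1) (h2 : φ a.S a.hS a.pt ≤ φ b.S b.hS b.pt),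
          D.map (homOfLE h1) ≫ σ b.S b.hS b.pt = σ a.S a.hS a.pt ≫ G.map (homOfLE h2)
        le_refl := fun a => ⟨le_rfl, le_rfl, by simp⟩
        le_trans := by
          rintro a b c ⟨h1, h2, h3⟩ ⟨k1, k2, k3⟩
          refine ⟨h1.trans k1, h2.trans k2, ?_⟩
          rw [← homOfLE_comp h1 k1, ← homOfLE_comp h2 k2, D.map_comp, G.map_comp,
            Category.assoc, k3, ← Category.assoc, h3, Category.assoc] }
    have hu := hcolim (Antisymmetrization X (· ≤ ·))
      (fun S hS => ⟨fun x => toAntisymmetrization (· ≤ ·) (⟨S, hS, x⟩ : X), fun a b hab =>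
        show (⟨S, hS, a⟩ : X) ≤ ⟨S, hS, b⟩ from
          ⟨hab, (φ S hS).monotone hab, hnat S hS a b hab⟩⟩)
      (by
        intro S hS S' hS' hsub x
        apply Quotient.sound
        have e := hφ S hS S' hS' hsub x
        have e2 := hσ S hS S' hS' hsub x
        refine ⟨⟨le_rfl, e.le, ?_⟩, ⟨le_rfl, e.ge, ?_⟩⟩
        · simp only [homOfLE_refl, D.map_id, Category.id_comp]
          rw [e2, Category.assoc, ← eqToHom_map G e.symm, ← G.map_comp]
          have : eqToHom e.symm ≫ homOfLE e.le = 𝟙 _ := Subsingleton.elim _ _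
          rw [this]; simp
        · simp only [homOfLE_refl, D.map_id, Category.id_comp]
          rw [e2, ← eqToHom_map G e.symm]
          congr 1)
    obtain ⟨H, hH, -⟩ := hu
    intro S hS x S' hS' y hxy
    have hle := H.monotone hxy
    rw [hH S hS x, hH S' hS' y] at hle
    obtain ⟨_, h2, h3⟩ : (⟨S, hS, x⟩ : X) ≤ ⟨S', hS', y⟩ := hle
    exact ⟨h2, h3⟩
  obtain ⟨H, hH, hHu⟩ := hcolim Q φ hφ
  choose c hc hxc using hcov
  have heq : ∀ x, φ (c x) (hc x) ⟨x, hxc x⟩ = H x := fun x => (hH _ (hc x) ⟨x, hxc x⟩).symm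
  refine ⟨⟨H, fun x => σ (c x) (hc x) ⟨x, hxc x⟩ ≫ eqToHom (congrArg G.obj (heq x))⟩,
    ⟨?_, ?_⟩, ?_⟩
  · intro x y hxy
    obtain ⟨h, e⟩ := key _ (hc x) ⟨x, hxc x⟩ _ (hc y) ⟨y, hxc y⟩ hxy
    dsimp only
    rw [← Category.assoc, e, ← eqToHom_map G (heq x), ← eqToHom_map G (heq y), Category.assoc,
      Category.assoc, ← G.map_comp, ← G.map_comp]
    congr 1
  · intro S hS x
    refine ⟨hH S hS x, ?_⟩
    obtain ⟨h, e⟩ := key _ hS x _ (hc x.1) ⟨x.1, hxc x.1⟩ le_rfl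
    simp only [homOfLE_refl, D.map_id, Category.id_comp] at e
    dsimp only
    rw [e, ← eqToHom_map G (heq x.1), ← eqToHom_map G (hH S hS x).symm, Category.assoc,
      ← G.map_comp]
    congr 1
  · rintro ⟨K, τ⟩ ⟨-, hK⟩
    obtain rfl : K = H := hHu K (fun S hS x => (hK S hS x).1)
    congr 1
    funext x
    exact (hK _ (hc x) ⟨x, hxc x⟩).2
end

section
/- Let X be a pospace, k a field, and n ≥ 1. The pair (tpos(X), H⃗_n(X;k)), together with the morphisms (inclusion, identity) from each restriction, is the colimit in Pers(Vect_k) of the diagram over the chains of tpos(X) sending each chain C (with the induced order) to (C, H⃗_n(X;k) restricted to C), and each inclusion of chains to the morphism (inclusion, identity). That is, the natural homology of X is the colimit in Pers(Vect_k) of the persistent homology along each of its traces. -/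
open CategoryTheory

noncomputable section

/-- Traces of directed paths. -/
def IsDiTrace {X : Type*} [TopologicalSpace X] [PartialOrder X] (a : Trace X) : Prop :=
  ∃ f, IsDipath f ∧ a = trc f

/-- The trace poset `tpos(X)` of a pospace: traces of directed paths, ordered by extension. -/
def TPos (X : Type*) [TopologicalSpace X] [PartialOrder X] : Type _ :=
  {a : Trace X // IsDiTrace a}

/-- The order of the trace poset. -/
def TPosLE {X : Type*} [TopologicalSpace X] [PartialOrder X] (a b : TPos X) : Prop :=
  TraceLE a.1 b.1

/-- Initial point of a trace. -/
def Trace.src {X : Type*} (a : Trace X) : X :=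
  Quot.lift (fun f => f 0)
    (fun f g h => by
      obtain ⟨φ, ψ, hφ, hψ, hfg⟩ := h
      have h0 : f (φ 0) = g (ψ 0) := congrFun hfg 0
      rwa [hφ.2.2.1, hψ.2.2.1] at h0) a

/-- Terminal point of a trace. -/
def Trace.tgt {X : Type*} (a : Trace X) : X :=
  Quot.lift (fun f => f 1)
    (fun f g h => by
      obtain ⟨φ, ψ, hφ, hψ, hfg⟩ := h
      have h1 : f (φ 1) = g (ψ 1) := congrFun hfg 1
      rwa [hφ.2.2.2, hψ.2.2.2] at h1) a

/-- The space of dipaths from `x` to `y`, with the compact-open topology. -/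
abbrev DipathSpace (X : Type) [TopologicalSpace X] [Preorder X] (x y : X) : Type :=
  {p : C(unitInterval, X) // Monotone p ∧ p 0 = x ∧ p 1 = y}

/-- The trace space from `x` to `y`: dipaths modulo reparametrization, quotient topology. -/
abbrev TraceSpace (X : Type) [TopologicalSpace X] [Preorder X] (x y : X) : Type :=
  Quot (fun p q : DipathSpace X x y => ReparamEquiv (p.1 : unitInterval → X) q.1)

/-- The `m`-th singular homology functor with coefficients in `R`. -/
def SingularH (R : Type) [CommRing R] (m : ℕ) : TopCat.{0} ⥤ ModuleCat.{0} R :=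
  TopCat.toSSet ⋙ ((SimplicialObject.whiskering _ _).obj (ModuleCat.free R)) ⋙
    AlgebraicTopology.alternatingFaceMapComplex _ ⋙ HomologicalComplex.homologyFunctor _ _ m

/-- The object part of the natural homology diagram `H⃗_n(X;k)`:
the `(n-1)`-st singular homology of the trace space between the endpoints of a trace. -/
def Hobj (k : Type) [Field k] (m : ℕ) (X : Type) [TopologicalSpace X] [PartialOrder X]
    (a : TPos X) : ModuleCat k :=
  (SingularH k m).obj (TopCat.of (TraceSpace X a.1.src a.1.tgt))

/-- Let `X` be a pospace, `k` a field and `n ≥ 1`.  The natural homology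
`(tpos(X), H⃗_n(X;k))`, with the morphisms `(inclusion, identity)` from each restriction, is the
colimit in `Pers(Vect_k)` of the diagram over the chains of `tpos(X)`, sending each chain `C` to
`(C, H⃗_n(X;k)|_C)` and each inclusion of chains to `(inclusion, identity)`.  The natural
homology diagram is presented by its object part `Hobj` (defined concretely above) and its map
part `Hmap`, characterized by: it is functorial, and the map attached to an extension
`⟨g⟩ = ⟨u⟩ ⋆ ⟨f⟩ ⋆ ⟨v⟩` is induced in singular homology by the continuous map
`⟨u⟩ ⋆ - ⋆ ⟨v⟩` between trace spaces.  Morphisms of `Pers(Vect_k)` are presented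
componentwise. -/
theorem natural_homology_is_colimit_of_persistence_along_traces
    (k : Type) [Field k] (n : ℕ) (hn : 1 ≤ n)
    (X : Type) [TopologicalSpace X] [PartialOrder X] [T2Space X] [OrderClosedTopology X]
    -- the map part of the natural homology functor H⃗_n(X;k) on tpos(X) ...
    (Hmap : ∀ a b : TPos X, TPosLE a b → (Hobj k (n - 1) X a ⟶ Hobj k (n - 1) X b))
    -- ... which is functorial ...
    (hid : ∀ (a : TPos X) (h : TPosLE a a), Hmap a a h = 𝟙 _)
    (hcomp : ∀ (a b c : TPos X) (hab : TPosLE a b) (hbc : TPosLE b c) (hac : TPosLE a c),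
      Hmap a c hac = Hmap a b hab ≫ Hmap b c hbc)
    -- ... and whose maps are induced in homology by concatenation of the extensions:
    (hinduced : ∀ (a b : TPos X) (h : TPosLE a b),
      ∃ (g : TopCat.of (TraceSpace X a.1.src a.1.tgt) ⟶ TopCat.of (TraceSpace X b.1.src b.1.tgt))
        (u v : unitInterval → X), IsDipath u ∧ IsDipath v ∧
        (∃ f : unitInterval → X, IsDipath f ∧ u 1 = f 0 ∧ f 1 = v 0 ∧
          a.1 = trc f ∧ b.1 = trc (concatFun (concatFun u f) v)) ∧
        (∀ (p : DipathSpace X a.1.src a.1.tgt) (q : DipathSpace X b.1.src b.1.tgt),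
          ReparamEquiv (q.1 : unitInterval → X) (concatFun (concatFun u (p.1 : unitInterval → X)) v) →
          g (Quot.mk _ p) = Quot.mk _ q) ∧
        Hmap a b h = (SingularH k (n - 1)).map g) :
    -- conclusion: `(tpos(X), H⃗_n(X;k))` is a colimit cocone in `Pers(Vect_k)` over
    -- the diagram of restrictions to all chains of `tpos(X)`:
    ∀ (Q : Type) [PartialOrder Q] (G : Q ⥤ ModuleCat k)
      (φ : ∀ S : Set (TPos X), IsChain TPosLE S → (↥S → Q)),
      -- each φ_S monotone, i.e. (φ_S, σ_S) : (S, H|_S) → (Q, G) is a morphism in Pers(Vect_k)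
      ∀ (hφmono : ∀ (S : Set (TPos X)) (hS : IsChain TPosLE S) (x y : ↥S),
          TPosLE x.1 y.1 → φ S hS x ≤ φ S hS y)
        (σ : ∀ (S : Set (TPos X)) (hS : IsChain TPosLE S) (x : ↥S),
          Hobj k (n - 1) X x.1 ⟶ G.obj (φ S hS x)),
        (∀ (S : Set (TPos X)) (hS : IsChain TPosLE S) (x y : ↥S) (h : TPosLE x.1 y.1),
          Hmap x.1 y.1 h ≫ σ S hS y = σ S hS x ≫ G.map (homOfLE (hφmono S hS x y h))) →
        -- compatibility of the family with inclusions of chains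
        ∀ (hφcompat : ∀ (S : Set (TPos X)) (hS : IsChain TPosLE S)
            (S' : Set (TPos X)) (hS' : IsChain TPosLE S') (hsub : S ⊆ S') (x : ↥S),
            φ S' hS' ⟨x.1, hsub x.2⟩ = φ S hS x),
          (∀ (S : Set (TPos X)) (hS : IsChain TPosLE S)
            (S' : Set (TPos X)) (hS' : IsChain TPosLE S') (hsub : S ⊆ S') (x : ↥S),
            σ S' hS' ⟨x.1, hsub x.2⟩ =
              σ S hS x ≫ eqToHom (congrArg G.obj (hφcompat S hS S' hS' hsub x).symm)) →
          -- unique factorization through `(tpos(X), H⃗_n(X;k))`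
          ∃! Hσ : Σ' H : TPos X → Q, ∀ a : TPos X, Hobj k (n - 1) X a ⟶ G.obj (H a),
            ∃ hmono : ∀ a b : TPos X, TPosLE a b → Hσ.1 a ≤ Hσ.1 b,
              (∀ (a b : TPos X) (h : TPosLE a b),
                Hmap a b h ≫ Hσ.2 b = Hσ.2 a ≫ G.map (homOfLE (hmono a b h))) ∧
              (∀ (S : Set (TPos X)) (hS : IsChain TPosLE S) (x : ↥S),
                ∃ h : Hσ.1 x.1 = φ S hS x,
                  Hσ.2 x.1 = σ S hS x ≫ eqToHom (congrArg G.obj h.symm)) := by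
  intro Q _ G φ hφmono σ hσ hφcompat hσcompat
  have hsing : ∀ a : TPos X, IsChain TPosLE ({a} : Set (TPos X)) := fun a =>
    Set.pairwise_singleton _ _
  have hpair : ∀ a b : TPos X, TPosLE a b → IsChain TPosLE ({a, b} : Set (TPos X)) := by
    intro a b h x hx y hy hxy
    rcases hx with rfl | rfl <;> rcases hy with rfl | rfl
    · exact absurd rfl hxy
    · exact Or.inl h
    · exact Or.inr h
    · exact absurd rfl hxy
  have key : ∀ (q₁ q₂ r₁ r₂ : Q) (e₁ : q₁ = r₁) (e₂ : q₂ = r₂) (l : q₁ ≤ q₂) (l' : r₁ ≤ r₂),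
      eqToHom (congrArg G.obj e₁) ≫ G.map (homOfLE l') =
        G.map (homOfLE l) ≫ eqToHom (congrArg G.obj e₂) := by
    intro q₁ q₂ r₁ r₂ e₁ e₂ l l'
    subst e₁ e₂
    simp
  have hsub : ∀ (S : Set (TPos X)) (x : ↥S), ({x.1} : Set (TPos X)) ⊆ S := fun S x =>
    Set.singleton_subset_iff.2 x.2
  have hφ1 : ∀ (S : Set (TPos X)) (hS : IsChain TPosLE S) (x : ↥S),
      φ S hS x = φ {x.1} (hsing x.1) ⟨x.1, rfl⟩ := fun S hS x =>
    hφcompat {x.1} (hsing x.1) S hS (hsub S x) ⟨x.1, rfl⟩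
  have hσ1 : ∀ (S : Set (TPos X)) (hS : IsChain TPosLE S) (x : ↥S),
      σ {x.1} (hsing x.1) ⟨x.1, rfl⟩ = σ S hS x ≫ eqToHom (congrArg G.obj (hφ1 S hS x)) := by
    intro S hS x
    have h := hσcompat {x.1} (hsing x.1) S hS (hsub S x) ⟨x.1, rfl⟩
    have h' : σ S hS x = σ {x.1} (hsing x.1) ⟨x.1, rfl⟩ ≫
      eqToHom (congrArg G.obj (hφ1 S hS x).symm) := h
    rw [h', Category.assoc, eqToHom_trans, eqToHom_refl, Category.comp_id]
  have hmono : ∀ a b : TPos X, TPosLE a b →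
      φ {a} (hsing a) ⟨a, rfl⟩ ≤ φ {b} (hsing b) ⟨b, rfl⟩ := by
    intro a b h
    rw [← hφ1 {a, b} (hpair a b h) ⟨a, Or.inl rfl⟩, ← hφ1 {a, b} (hpair a b h) ⟨b, Or.inr rfl⟩]
    exact hφmono {a, b} (hpair a b h) _ _ h
  refine ⟨⟨fun a => φ {a} (hsing a) ⟨a, rfl⟩, fun a => σ {a} (hsing a) ⟨a, rfl⟩⟩,
    ⟨hmono, ?_, ?_⟩, ?_⟩
  · intro a b h
    have ha := hσ1 {a, b} (hpair a b h) ⟨a, Or.inl rfl⟩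
    have hb := hσ1 {a, b} (hpair a b h) ⟨b, Or.inr rfl⟩
    have hn := hσ {a, b} (hpair a b h) ⟨a, Or.inl rfl⟩ ⟨b, Or.inr rfl⟩ h
    dsimp only at ha hb hn ⊢
    rw [ha, hb, ← Category.assoc, hn, Category.assoc, Category.assoc]
    congr 1
    exact (key _ _ _ _ (hφ1 {a, b} (hpair a b h) ⟨a, Or.inl rfl⟩)
      (hφ1 {a, b} (hpair a b h) ⟨b, Or.inr rfl⟩) _ _).symm
  · intro S hS x
    exact ⟨(hφ1 S hS x).symm, hσ1 S hS x⟩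
  · rintro ⟨H, s⟩ ⟨_, _, h3⟩
    obtain rfl : H = fun a => φ {a} (hsing a) ⟨a, rfl⟩ := by
      funext a
      exact (h3 {a} (hsing a) ⟨a, rfl⟩).1
    congr 1
    funext a
    obtain ⟨h, h'⟩ := h3 {a} (hsing a) ⟨a, rfl⟩
    have h'' : s a = σ {a} (hsing a) ⟨a, rfl⟩ ≫ 𝟙 _ := h'
    rw [h'', Category.comp_id]

end
end

section
/- Let X be a compact pospace, k a field, and n ≥ 1. The pair (tpos(X), H⃗_n(X;k)), together with the morphisms (inclusion, identity) from each restriction, is the colimit in Pers(Vect_k) of the diagram over the maximal chains of tpos(X) completed with their pairwise intersections, sending each such sub-poset S to (S, H⃗_n(X;k) restricted to S) and each inclusion to the morphism (inclusion, identity). That is, the natural homology of X is the colimit in Pers(Vect_k) of the persistent homology along its maximal traces, seen as maximal chains in tpos(X), completed with pullbacks. -/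
open CategoryTheory

noncomputable section

/-- The sub-posets of the trace poset consisting of the maximal chains together with their
pairwise intersections (their pullbacks in the category of posets). -/
def MaxChainOrInter (X : Type) [TopologicalSpace X] [PartialOrder X]
    (S : Set (TPos X)) : Prop :=
  IsMaxChain TPosLE S ∨
    ∃ C₁ C₂ : Set (TPos X), IsMaxChain TPosLE C₁ ∧ IsMaxChain TPosLE C₂ ∧ S = C₁ ∩ C₂

/-- Two comparable traces lie in a common maximal chain of `tpos(X)`. -/
theorem exists_maxChain_pair {X : Type} [TopologicalSpace X] [PartialOrder X] (a b : TPos X)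
    (h : a = b ∨ TPosLE a b) :
    ∃ C : Set (TPos X), IsMaxChain TPosLE C ∧ a ∈ C ∧ b ∈ C := by
  have hc : IsChain (TPosLE (X := X)) {a, b} := by
    rintro x hx y hy hxy
    simp only [Set.mem_insert_iff, Set.mem_singleton_iff] at hx hy
    rcases h with rfl | h
    · rcases hx with rfl | rfl <;> rcases hy with rfl | rfl <;> exact absurd rfl hxy
    · rcases hx with rfl | rfl <;> rcases hy with rfl | rfl
      · exact absurd rfl hxy
      · exact Or.inl h
      · exact Or.inr h
      · exact absurd rfl hxy
  obtain ⟨C, hC, hsub⟩ := hc.exists_maxChain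
  exact ⟨C, hC, hsub (by simp), hsub (by simp)⟩

/-- Let `X` be a compact pospace, `k` a field and `n ≥ 1`.  The natural
homology `(tpos(X), H⃗_n(X;k))`, with the morphisms `(inclusion, identity)` from each
restriction, is the colimit in `Pers(Vect_k)` of the diagram over the maximal chains of
`tpos(X)` completed with their pairwise intersections, sending each such sub-poset `S` to
`(S, H⃗_n(X;k)|_S)` and each inclusion to `(inclusion, identity)`.  The natural homology diagram
is presented by its object part `Hobj` (defined concretely above) and its map part `Hmap`,
characterized by: it is functorial, and the map attached to an extension
`⟨g⟩ = ⟨u⟩ ⋆ ⟨f⟩ ⋆ ⟨v⟩` is induced in singular homology by the continuous map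
`⟨u⟩ ⋆ - ⋆ ⟨v⟩` between trace spaces.  Morphisms of `Pers(Vect_k)` are presented
componentwise. -/
theorem natural_homology_is_colimit_of_persistence_along_maximal_traces
    (k : Type) [Field k] (n : ℕ) (hn : 1 ≤ n)
    (X : Type) [TopologicalSpace X] [PartialOrder X] [T2Space X] [OrderClosedTopology X]
    [CompactSpace X]
    -- the map part of the natural homology functor H⃗_n(X;k) on tpos(X) ...
    (Hmap : ∀ a b : TPos X, TPosLE a b → (Hobj k (n - 1) X a ⟶ Hobj k (n - 1) X b))
    -- ... which is functorial ...
    (hid : ∀ (a : TPos X) (h : TPosLE a a), Hmap a a h = 𝟙 _)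
    (hcomp : ∀ (a b c : TPos X) (hab : TPosLE a b) (hbc : TPosLE b c) (hac : TPosLE a c),
      Hmap a c hac = Hmap a b hab ≫ Hmap b c hbc)
    -- ... and whose maps are induced in homology by concatenation of the extensions:
    (hinduced : ∀ (a b : TPos X) (h : TPosLE a b),
      ∃ (g : TopCat.of (TraceSpace X a.1.src a.1.tgt) ⟶ TopCat.of (TraceSpace X b.1.src b.1.tgt))
        (u v : unitInterval → X), IsDipath u ∧ IsDipath v ∧
        (∃ f : unitInterval → X, IsDipath f ∧ u 1 = f 0 ∧ f 1 = v 0 ∧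
          a.1 = trc f ∧ b.1 = trc (concatFun (concatFun u f) v)) ∧
        (∀ (p : DipathSpace X a.1.src a.1.tgt) (q : DipathSpace X b.1.src b.1.tgt),
          ReparamEquiv (q.1 : unitInterval → X) (concatFun (concatFun u (p.1 : unitInterval → X)) v) →
          g (Quot.mk _ p) = Quot.mk _ q) ∧
        Hmap a b h = (SingularH k (n - 1)).map g) :
    -- conclusion: `(tpos(X), H⃗_n(X;k))` is a colimit cocone in `Pers(Vect_k)` over the diagram
    -- of restrictions to the maximal chains of `tpos(X)` and their pairwise intersections:
    ∀ (Q : Type) [PartialOrder Q] (G : Q ⥤ ModuleCat k)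
      (φ : ∀ S : Set (TPos X), MaxChainOrInter X S → (↥S → Q)),
      -- each φ_S monotone, i.e. (φ_S, s_S) : (S, H|_S) → (Q, G) is a morphism in Pers(Vect_k)
      ∀ (hφmono : ∀ (S : Set (TPos X)) (hS : MaxChainOrInter X S) (x y : ↥S),
          TPosLE x.1 y.1 → φ S hS x ≤ φ S hS y)
        (s : ∀ (S : Set (TPos X)) (hS : MaxChainOrInter X S) (x : ↥S),
          Hobj k (n - 1) X x.1 ⟶ G.obj (φ S hS x)),
        (∀ (S : Set (TPos X)) (hS : MaxChainOrInter X S) (x y : ↥S) (h : TPosLE x.1 y.1),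
          Hmap x.1 y.1 h ≫ s S hS y = s S hS x ≫ G.map (homOfLE (hφmono S hS x y h))) →
        -- compatibility of the family with the inclusions of the diagram
        ∀ (hφcompat : ∀ (S : Set (TPos X)) (hS : MaxChainOrInter X S)
            (S' : Set (TPos X)) (hS' : MaxChainOrInter X S') (hsub : S ⊆ S') (x : ↥S),
            φ S' hS' ⟨x.1, hsub x.2⟩ = φ S hS x),
          (∀ (S : Set (TPos X)) (hS : MaxChainOrInter X S)
            (S' : Set (TPos X)) (hS' : MaxChainOrInter X S') (hsub : S ⊆ S') (x : ↥S),
            s S' hS' ⟨x.1, hsub x.2⟩ =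
              s S hS x ≫ eqToHom (congrArg G.obj (hφcompat S hS S' hS' hsub x).symm)) →
          -- unique factorization through `(tpos(X), H⃗_n(X;k))`
          ∃! Hσ : Σ' H : TPos X → Q, ∀ a : TPos X, Hobj k (n - 1) X a ⟶ G.obj (H a),
            ∃ hmono : ∀ a b : TPos X, TPosLE a b → Hσ.1 a ≤ Hσ.1 b,
              (∀ (a b : TPos X) (h : TPosLE a b),
                Hmap a b h ≫ Hσ.2 b = Hσ.2 a ≫ G.map (homOfLE (hmono a b h))) ∧
              (∀ (S : Set (TPos X)) (hS : MaxChainOrInter X S) (x : ↥S),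
                ∃ h : Hσ.1 x.1 = φ S hS x,
                  Hσ.2 x.1 = s S hS x ≫ eqToHom (congrArg G.obj h.symm)) := by
  intro Q _ G φ hφmono s hnat hφcompat hscompat
  have hex := fun a : TPos X => exists_maxChain_pair a a (Or.inl rfl)
  choose C hC haC _ using hex
  -- comparison of two maximal chains, via their intersection
  have key : ∀ (S S' : Set (TPos X)) (hS : IsMaxChain TPosLE S) (hS' : IsMaxChain TPosLE S')
      (a : TPos X) (h : a ∈ S) (h' : a ∈ S'),
      ∃ e : φ S (Or.inl hS) ⟨a, h⟩ = φ S' (Or.inl hS') ⟨a, h'⟩,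
        s S (Or.inl hS) ⟨a, h⟩ =
          s S' (Or.inl hS') ⟨a, h'⟩ ≫ eqToHom (congrArg G.obj e.symm) := by
    intro S S' hS hS' a h h'
    have hI : MaxChainOrInter X (S ∩ S') := Or.inr ⟨S, S', hS, hS', rfl⟩
    have e1 := hφcompat _ hI S (Or.inl hS) Set.inter_subset_left ⟨a, h, h'⟩
    have e2 := hφcompat _ hI S' (Or.inl hS') Set.inter_subset_right ⟨a, h, h'⟩
    have f1 := hscompat _ hI S (Or.inl hS) Set.inter_subset_left ⟨a, h, h'⟩
    have f2 := hscompat _ hI S' (Or.inl hS') Set.inter_subset_right ⟨a, h, h'⟩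
    refine ⟨e1.trans e2.symm, ?_⟩
    rw [f1, f2, Category.assoc, eqToHom_trans]
  -- comparison of any member of the diagram with a maximal chain
  have key2 : ∀ (S : Set (TPos X)) (hS : MaxChainOrInter X S)
      (S' : Set (TPos X)) (hS' : IsMaxChain TPosLE S')
      (a : TPos X) (h : a ∈ S) (h' : a ∈ S'),
      ∃ e : φ S' (Or.inl hS') ⟨a, h'⟩ = φ S hS ⟨a, h⟩,
        s S' (Or.inl hS') ⟨a, h'⟩ =
          s S hS ⟨a, h⟩ ≫ eqToHom (congrArg G.obj e.symm) := by
    intro S hS S' hS' a h h'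
    rcases id hS with hM | ⟨C₁, C₂, h₁, h₂, rfl⟩
    · exact key S' S hS' hM a h' h
    · obtain ⟨e, f⟩ := key S' C₁ hS' h₁ a h' h.1
      have e1 := hφcompat _ hS C₁ (Or.inl h₁) Set.inter_subset_left ⟨a, h⟩
      have f1 := hscompat _ hS C₁ (Or.inl h₁) Set.inter_subset_left ⟨a, h⟩
      refine ⟨e.trans e1, ?_⟩
      rw [f, f1, Category.assoc, eqToHom_trans]
  have hGmap : ∀ {p q p' q' : Q} (ep : p = p') (eq : q = q') (h : p ≤ q) (h' : p' ≤ q'),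
      G.map (homOfLE h') ≫ eqToHom (congrArg G.obj eq.symm) =
        eqToHom (congrArg G.obj ep.symm) ≫ G.map (homOfLE h) := by
    intro p q p' q' ep eq h h'
    subst ep eq
    simp
  refine ⟨⟨fun a => φ (C a) (Or.inl (hC a)) ⟨a, haC a⟩,
    fun a => s (C a) (Or.inl (hC a)) ⟨a, haC a⟩⟩, ?_, ?_⟩
  · have hmono : ∀ a b : TPos X, TPosLE a b →
        φ (C a) (Or.inl (hC a)) ⟨a, haC a⟩ ≤ φ (C b) (Or.inl (hC b)) ⟨b, haC b⟩ := by
      intro a b hab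
      obtain ⟨D, hD, ha, hb⟩ := exists_maxChain_pair a b (Or.inr hab)
      obtain ⟨ea, -⟩ := key (C a) D (hC a) hD a (haC a) ha
      obtain ⟨eb, -⟩ := key (C b) D (hC b) hD b (haC b) hb
      rw [ea, eb]
      exact hφmono D (Or.inl hD) ⟨a, ha⟩ ⟨b, hb⟩ hab
    refine ⟨hmono, ?_, ?_⟩
    · intro a b hab
      obtain ⟨D, hD, ha, hb⟩ := exists_maxChain_pair a b (Or.inr hab)
      obtain ⟨ea, fa⟩ := key (C a) D (hC a) hD a (haC a) ha
      obtain ⟨eb, fb⟩ := key (C b) D (hC b) hD b (haC b) hb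
      have hn' := hnat D (Or.inl hD) ⟨a, ha⟩ ⟨b, hb⟩ hab
      dsimp only at hn' ⊢
      rw [fa, fb, ← Category.assoc, hn', Category.assoc, Category.assoc,
        hGmap ea eb (hmono a b hab)]
    · intro S hS x
      exact key2 S hS (C x.1) (hC x.1) x.1 x.2 (haC x.1)
  · rintro ⟨H, σ⟩ ⟨hm, -, hr⟩
    dsimp only at hr
    have hr' := fun a => hr (C a) (Or.inl (hC a)) ⟨a, haC a⟩
    have hH : H = fun a => φ (C a) (Or.inl (hC a)) ⟨a, haC a⟩ :=
      funext fun a => (hr' a).1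
    subst hH
    congr 1
    funext a
    obtain ⟨e, f⟩ := hr' a
    simpa using f

end
end

section
/- Let X be a compact pospace, α a point of X, k a field, and n ≥ 1. Let ↑α be the up-set of α (regarded as the constant trace at α) in tpos(X). Then (↑α, H⃗_n(X;k) restricted to ↑α), with the morphisms (inclusion, identity), is the colimit in Pers(Vect_k) of the diagram over the maximal chains of ↑α (equivalently, the maximal chains of tpos(X) passing through α) completed with their pairwise intersections, sending each such sub-poset S to (S, H⃗_n(X;k) restricted to S) and each inclusion to the morphism (inclusion, identity). -/
open CategoryTheory

noncomputable section

/-- Maximal chains of a sub-poset `U` of the trace poset: chains contained in `U` that are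
maximal among chains contained in `U`. -/
def MaxChainIn (X : Type) [TopologicalSpace X] [PartialOrder X]
    (U S : Set (TPos X)) : Prop :=
  IsChain TPosLE S ∧ S ⊆ U ∧
    ∀ S' : Set (TPos X), IsChain TPosLE S' → S' ⊆ U → S ⊆ S' → S' = S

/-- The maximal chains of `U` together with their pairwise intersections. -/
def MaxChainInOrInter (X : Type) [TopologicalSpace X] [PartialOrder X]
    (U S : Set (TPos X)) : Prop :=
  MaxChainIn X U S ∨
    ∃ C₁ C₂ : Set (TPos X), MaxChainIn X U C₁ ∧ MaxChainIn X U C₂ ∧ S = C₁ ∩ C₂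

/-- Every chain contained in `U` extends to a maximal chain of `U`. -/
theorem exists_maxChainIn (X : Type) [TopologicalSpace X] [PartialOrder X]
    (U S : Set (TPos X)) (hS : IsChain TPosLE S) (hSU : S ⊆ U) :
    ∃ C, MaxChainIn X U C ∧ S ⊆ C := by
  obtain ⟨C, hSC, hC⟩ := zorn_subset_nonempty {C : Set (TPos X) | IsChain TPosLE C ∧ C ⊆ U}
    (fun c hc hchain _ => ⟨⋃₀ c, ⟨by
      intro x hx y hy hxy
      obtain ⟨A, hA, hxA⟩ := hx
      obtain ⟨B, hB, hyB⟩ := hy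
      rcases hchain.total hA hB with h | h
      · exact (hc hB).1 (h hxA) hyB hxy
      · exact (hc hA).1 hxA (h hyB) hxy, Set.sUnion_subset fun A hA => (hc hA).2⟩,
      fun A hA => Set.subset_sUnion_of_mem hA⟩) S ⟨hS, hSU⟩
  exact ⟨C, ⟨hC.prop.1, hC.prop.2, fun S' h1 h2 h3 =>
    Set.Subset.antisymm (hC.le_of_ge ⟨h1, h2⟩ h3) h3⟩, hSC⟩

/-- Every member of the diagram is contained in a maximal chain. -/
theorem MaxChainInOrInter.exists_le {X : Type} [TopologicalSpace X] [PartialOrder X]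
    {U S : Set (TPos X)} (hS : MaxChainInOrInter X U S) : ∃ C, MaxChainIn X U C ∧ S ⊆ C := by
  rcases hS with h | ⟨C₁, C₂, h1, h2, rfl⟩
  · exact ⟨S, h, subset_rfl⟩
  · exact ⟨C₁, h1, Set.inter_subset_left⟩

/-- Let `X` be a compact pospace, `α ∈ X`, `k` a field and `n ≥ 1`, and let
`↑α` be the up-set of `α` (regarded as the constant trace at `α`) in `tpos(X)`.  Then
`(↑α, H⃗_n(X;k)|_{↑α})`, with the morphisms `(inclusion, identity)`, is the colimit in
`Pers(Vect_k)` of the diagram over the maximal chains of `↑α` (the maximal chains of `tpos(X)`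
through `α`) completed with their pairwise intersections, sending each such sub-poset `S` to
`(S, H⃗_n(X;k)|_S)` and each inclusion to `(inclusion, identity)`.  The natural homology diagram
is presented by its object part `Hobj` (defined concretely above) and its map part `Hmap`,
characterized by: it is functorial, and the map attached to an extension
`⟨g⟩ = ⟨u⟩ ⋆ ⟨f⟩ ⋆ ⟨v⟩` is induced in singular homology by the continuous map
`⟨u⟩ ⋆ - ⋆ ⟨v⟩` between trace spaces.  Morphisms of `Pers(Vect_k)` are presented
componentwise. -/
theorem natural_homology_of_upset_is_colimit_of_persistence_along_maximal_chains_through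
    (k : Type) [Field k] (n : ℕ) (hn : 1 ≤ n)
    (X : Type) [TopologicalSpace X] [PartialOrder X] [T2Space X] [OrderClosedTopology X]
    [CompactSpace X] (α : X)
    -- the map part of the natural homology functor H⃗_n(X;k) on tpos(X) ...
    (Hmap : ∀ a b : TPos X, TPosLE a b → (Hobj k (n - 1) X a ⟶ Hobj k (n - 1) X b))
    -- ... which is functorial ...
    (hid : ∀ (a : TPos X) (h : TPosLE a a), Hmap a a h = 𝟙 _)
    (hcomp : ∀ (a b c : TPos X) (hab : TPosLE a b) (hbc : TPosLE b c) (hac : TPosLE a c),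
      Hmap a c hac = Hmap a b hab ≫ Hmap b c hbc)
    -- ... and whose maps are induced in homology by concatenation of the extensions:
    (hinduced : ∀ (a b : TPos X) (h : TPosLE a b),
      ∃ (g : TopCat.of (TraceSpace X a.1.src a.1.tgt) ⟶ TopCat.of (TraceSpace X b.1.src b.1.tgt))
        (u v : unitInterval → X), IsDipath u ∧ IsDipath v ∧
        (∃ f : unitInterval → X, IsDipath f ∧ u 1 = f 0 ∧ f 1 = v 0 ∧
          a.1 = trc f ∧ b.1 = trc (concatFun (concatFun u f) v)) ∧
        (∀ (p : DipathSpace X a.1.src a.1.tgt) (q : DipathSpace X b.1.src b.1.tgt),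
          ReparamEquiv (q.1 : unitInterval → X) (concatFun (concatFun u (p.1 : unitInterval → X)) v) →
          g (Quot.mk _ p) = Quot.mk _ q) ∧
        Hmap a b h = (SingularH k (n - 1)).map g) :
    -- the up-set of α (as a constant trace) in tpos(X)
    ∀ U : Set (TPos X), U = {a : TPos X | TraceLE (trc fun _ => α) a.1} →
    -- conclusion: `(↑α, H⃗_n(X;k)|_{↑α})` is a colimit cocone in `Pers(Vect_k)` over the diagram
    -- of restrictions to the maximal chains of `↑α` and their pairwise intersections:
    ∀ (Q : Type) [PartialOrder Q] (G : Q ⥤ ModuleCat k)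
      (φ : ∀ S : Set (TPos X), MaxChainInOrInter X U S → (↥S → Q)),
      -- each φ_S monotone, i.e. (φ_S, s_S) : (S, H|_S) → (Q, G) is a morphism in Pers(Vect_k)
      ∀ (hφmono : ∀ (S : Set (TPos X)) (hS : MaxChainInOrInter X U S) (x y : ↥S),
          TPosLE x.1 y.1 → φ S hS x ≤ φ S hS y)
        (s : ∀ (S : Set (TPos X)) (hS : MaxChainInOrInter X U S) (x : ↥S),
          Hobj k (n - 1) X x.1 ⟶ G.obj (φ S hS x)),
        (∀ (S : Set (TPos X)) (hS : MaxChainInOrInter X U S) (x y : ↥S) (h : TPosLE x.1 y.1),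
          Hmap x.1 y.1 h ≫ s S hS y = s S hS x ≫ G.map (homOfLE (hφmono S hS x y h))) →
        -- compatibility of the family with the inclusions of the diagram
        ∀ (hφcompat : ∀ (S : Set (TPos X)) (hS : MaxChainInOrInter X U S)
            (S' : Set (TPos X)) (hS' : MaxChainInOrInter X U S') (hsub : S ⊆ S') (x : ↥S),
            φ S' hS' ⟨x.1, hsub x.2⟩ = φ S hS x),
          (∀ (S : Set (TPos X)) (hS : MaxChainInOrInter X U S)
            (S' : Set (TPos X)) (hS' : MaxChainInOrInter X U S') (hsub : S ⊆ S') (x : ↥S),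
            s S' hS' ⟨x.1, hsub x.2⟩ =
              s S hS x ≫ eqToHom (congrArg G.obj (hφcompat S hS S' hS' hsub x).symm)) →
          -- unique factorization through `(↑α, H⃗_n(X;k)|_{↑α})`
          ∃! Hσ : Σ' H : ↥U → Q, ∀ a : ↥U, Hobj k (n - 1) X a.1 ⟶ G.obj (H a),
            ∃ hmono : ∀ a b : ↥U, TPosLE a.1 b.1 → Hσ.1 a ≤ Hσ.1 b,
              (∀ (a b : ↥U) (h : TPosLE a.1 b.1),
                Hmap a.1 b.1 h ≫ Hσ.2 b = Hσ.2 a ≫ G.map (homOfLE (hmono a b h))) ∧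
              (∀ (S : Set (TPos X)) (hS : MaxChainInOrInter X U S) (x : ↥S) (hxU : x.1 ∈ U),
                ∃ h : Hσ.1 ⟨x.1, hxU⟩ = φ S hS x,
                  Hσ.2 ⟨x.1, hxU⟩ = s S hS x ≫ eqToHom (congrArg G.obj h.symm)) := by
  intro U _ Q _ G φ hφmono s hs hφcompat hscompat
  -- two members of the diagram through the same point agree at that point
  have key : ∀ (S : Set (TPos X)) (hS : MaxChainInOrInter X U S)
      (S' : Set (TPos X)) (hS' : MaxChainInOrInter X U S') (x : TPos X) (hx : x ∈ S) (hx' : x ∈ S'),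
      ∃ h : φ S hS ⟨x, hx⟩ = φ S' hS' ⟨x, hx'⟩,
        s S hS ⟨x, hx⟩ = s S' hS' ⟨x, hx'⟩ ≫ eqToHom (congrArg G.obj h.symm) := by
    intro S hS S' hS' x hx hx'
    obtain ⟨C, hC, hSC⟩ := hS.exists_le
    obtain ⟨C', hC', hSC'⟩ := hS'.exists_le
    have hI : MaxChainInOrInter X U (C ∩ C') := Or.inr ⟨C, C', hC, hC', rfl⟩
    have e1 := hφcompat S hS C (Or.inl hC) hSC ⟨x, hx⟩
    have e2 := hφcompat S' hS' C' (Or.inl hC') hSC' ⟨x, hx'⟩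
    have e3 := hφcompat _ hI C (Or.inl hC) Set.inter_subset_left ⟨x, hSC hx, hSC' hx'⟩
    have e4 := hφcompat _ hI C' (Or.inl hC') Set.inter_subset_right ⟨x, hSC hx, hSC' hx'⟩
    have f1 := hscompat S hS C (Or.inl hC) hSC ⟨x, hx⟩
    have f2 := hscompat S' hS' C' (Or.inl hC') hSC' ⟨x, hx'⟩
    have f3 := hscompat _ hI C (Or.inl hC) Set.inter_subset_left ⟨x, hSC hx, hSC' hx'⟩
    have f4 := hscompat _ hI C' (Or.inl hC') Set.inter_subset_right ⟨x, hSC hx, hSC' hx'⟩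
    refine ⟨e1.symm.trans (e3.trans (e4.symm.trans e2)), ?_⟩
    have g1 := f1.symm.trans f3
    have g2 := f2.symm.trans f4
    rw [← cancel_mono (eqToHom (congrArg G.obj e1.symm)), g1]
    have g3 := congrArg (fun t => t ≫ eqToHom (congrArg G.obj (e4.trans e3.symm))) g2
    simp only [Category.assoc, eqToHom_trans] at g3 ⊢
    exact g3.symm
  have hpick : ∀ a : ↥U, ∃ C, MaxChainIn X U C ∧ a.1 ∈ C := fun a => by
    obtain ⟨C, hC, h⟩ := exists_maxChainIn X U {a.1} (Set.subsingleton_singleton.isChain)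
      (Set.singleton_subset_iff.2 a.2)
    exact ⟨C, hC, h rfl⟩
  choose C hC haC using hpick
  have hmono : ∀ a b : ↥U, TPosLE a.1 b.1 →
      ∃ D, MaxChainIn X U D ∧ a.1 ∈ D ∧ b.1 ∈ D := fun a b h => by
    obtain ⟨D, hD, h⟩ := exists_maxChainIn X U {a.1, b.1} (by
        intro x hx y hy hxy
        rcases hx with rfl | rfl <;> rcases hy with rfl | rfl
        · exact absurd rfl hxy
        · exact Or.inl h
        · exact Or.inr h
        · exact absurd rfl hxy)
      (by rintro x (rfl | rfl); exacts [a.2, b.2])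
    exact ⟨D, hD, h (Or.inl rfl), h (Or.inr rfl)⟩
  have hC' : ∀ a, MaxChainInOrInter X U (C a) := fun a => Or.inl (hC a)
  have hle : ∀ a b : ↥U, TPosLE a.1 b.1 → φ (C a) (hC' a) ⟨a.1, haC a⟩ ≤
      φ (C b) (hC' b) ⟨b.1, haC b⟩ := by
    intro a b h
    obtain ⟨D, hD, haD, hbD⟩ := hmono a b h
    obtain ⟨ha, -⟩ := key (C a) (hC' a) D (Or.inl hD) a.1 (haC a) haD
    obtain ⟨hb, -⟩ := key (C b) (hC' b) D (Or.inl hD) b.1 (haC b) hbD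
    exact ha.le.trans ((hφmono D (Or.inl hD) ⟨a.1, haD⟩ ⟨b.1, hbD⟩ h).trans hb.ge)
  refine ⟨⟨fun a => φ (C a) (hC' a) ⟨a.1, haC a⟩,
    fun a => s (C a) (hC' a) ⟨a.1, haC a⟩⟩, ⟨hle, ?_, ?_⟩, ?_⟩
  · intro a b h
    obtain ⟨D, hD, haD, hbD⟩ := hmono a b h
    obtain ⟨ha, ha'⟩ := key (C a) (hC' a) D (Or.inl hD) a.1 (haC a) haD
    obtain ⟨hb, hb'⟩ := key (C b) (hC' b) D (Or.inl hD) b.1 (haC b) hbD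
    have h0 := hs D (Or.inl hD) ⟨a.1, haD⟩ ⟨b.1, hbD⟩ h
    dsimp only at h0 ⊢
    have hG : ∀ {x y : Q} (e : x = y), eqToHom (congrArg G.obj e) = G.map (homOfLE e.le) := by
      intro x y e
      subst e
      exact (G.map_id x).symm
    rw [ha', hb', reassoc_of% h0, hG ha.symm, hG hb.symm, Category.assoc, ← G.map_comp,
      ← G.map_comp]
    rfl
  · intro S hS x hxU
    exact key _ _ S hS x.1 _ x.2
  · rintro ⟨H', σ'⟩ ⟨-, -, h3⟩
    have hH : H' = fun a => φ (C a) (hC' a) ⟨a.1, haC a⟩ :=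
      funext fun a => (h3 (C a) (hC' a) ⟨a.1, haC a⟩ a.2).1
    subst hH
    congr 1
    funext a
    obtain ⟨h, h'⟩ := h3 (C a) (hC' a) ⟨a.1, haC a⟩ a.2
    simpa using h'


end
end
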